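/- arXiv:0905.0679 — 2 statements merged into one kernel-verified Lean document; each statement's English description precedes it below -/
import Mathlib

section
/- (q-deformed MacMahon identity) For positive integers a, b, c, a parameter q, and a parameter ζ such that no denominator vanishes: Σ over all plane partitions Π contained in the a×b×c box of q^{|Π|} ∏_{1≤i≤a, 1≤j≤b} (ζ² − q^{i+j−2Π_{ij}−2})/(ζ² − q^{i+j−c−2}) equals ∏_{1≤i≤a, 1≤j≤b} (1 − q^{i+j+c−1})/(1 − q^{i+j−1}). -/
open Finset
open scoped Classical

/-- A plane partition in the `a×b×c` box: an `a×b` array with entries in `{0,…,c}`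
that is weakly decreasing along rows and columns. -/
def IsPlanePartition {a b c : ℕ} (P : Fin a → Fin b → Fin (c + 1)) : Prop :=
  ∀ i i' j j', i ≤ i' → j ≤ j' → P i' j' ≤ P i j

/-- The volume `|Π|` of a plane partition. -/
def ppVolume {a b c : ℕ} (P : Fin a → Fin b → Fin (c + 1)) : ℕ :=
  ∑ i : Fin a, ∑ j : Fin b, (P i j : ℕ)

/-- row variable -/
noncomputable def xx (q z : ℂ) (e : ℤ) (k : ℕ) (l : ℤ) : ℂ := z * q ^ l + q ^ (e + 1 - k - l)
/-- row weight -/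
noncomputable def ww (q z : ℂ) (e : ℤ) (k : ℕ) (l : ℤ) : ℂ := z * q ^ l - q ^ (e + 1 - k - l)

lemma xx_sub (q z : ℂ) (hq : q ≠ 0) (e : ℤ) (k : ℕ) (l : ℤ) :
    xx q z e (k+1) l - xx q z e (k+1) (l-1) = (1 - q⁻¹) * ww q z e k l := by
  have h1 : q ^ (e + 1 - ((k+1 : ℕ):ℤ) - l) = q ^ (e + 1 - (k:ℤ) - l) * q⁻¹ := by
    rw [← zpow_sub_one₀ hq]; congr 1; push_cast; ring
  have h2 : q ^ (e + 1 - ((k+1 : ℕ):ℤ) - (l - 1)) = q ^ (e + 1 - (k:ℤ) - l) := by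
    congr 1; push_cast; ring
  unfold xx ww
  rw [h1, h2, zpow_sub_one₀ hq]; ring

lemma xx_add (q z : ℂ) (hq : q ≠ 0) (e : ℤ) (k : ℕ) (l : ℤ) :
    xx q z e (k+1) l + xx q z e (k+1) (l-1) = (1 + q⁻¹) * xx q z e k l := by
  have h1 : q ^ (e + 1 - ((k+1 : ℕ):ℤ) - l) = q ^ (e + 1 - (k:ℤ) - l) * q⁻¹ := by
    rw [← zpow_sub_one₀ hq]; congr 1; push_cast; ring
  have h2 : q ^ (e + 1 - ((k+1 : ℕ):ℤ) - (l - 1)) = q ^ (e + 1 - (k:ℤ) - l) := by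
    congr 1; push_cast; ring
  unfold xx
  rw [h1, h2, zpow_sub_one₀ hq]; ring

lemma xx_mul (q z : ℂ) (hq : q ≠ 0) (e : ℤ) (k : ℕ) (l : ℤ) :
    xx q z e (k+1) l * xx q z e (k+1) (l-1) = q⁻¹ * xx q z e k l ^ 2 +
      z * q ^ (e + 1 - k) * (1 - q⁻¹) ^ 2 := by
  have h1 : q ^ (e + 1 - ((k+1 : ℕ):ℤ) - l) = q ^ (e + 1 - (k:ℤ) - l) * q⁻¹ := by
    rw [← zpow_sub_one₀ hq]; congr 1; push_cast; ring
  have h2 : q ^ (e + 1 - ((k+1 : ℕ):ℤ) - (l - 1)) = q ^ (e + 1 - (k:ℤ) - l) := by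
    congr 1; push_cast; ring
  have h3 : q ^ (e + 1 - (k:ℤ)) = q ^ l * q ^ (e + 1 - (k:ℤ) - l) := by
    rw [← zpow_add₀ hq]; congr 1; ring
  unfold xx
  rw [h1, h2, h3, zpow_sub_one₀ hq]; ring

open Polynomial in
lemma poly_aux (q z : ℂ) (hq : q ≠ 0) (e : ℤ) (k : ℕ) : ∀ m : ℕ, ∃ Q : ℂ[X],
    Q.natDegree ≤ m ∧ Q.coeff m = 1 - q⁻¹ ^ (m + 1) ∧ ∀ l,
    xx q z e (k+1) l ^ (m+1) - xx q z e (k+1) (l-1) ^ (m+1) =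
      ww q z e k l * Q.eval (xx q z e k l) := by
  intro m
  induction m using Nat.strong_induction_on with
  | _ m ih =>
  match m, ih with
  | 0, _ =>
    refine ⟨C (1 - q⁻¹), by simp, by simp, fun l => ?_⟩
    simp only [zero_add, pow_one, eval_C]
    rw [xx_sub q z hq]; ring
  | 1, _ =>
    refine ⟨C ((1 - q⁻¹) * (1 + q⁻¹)) * X, ?_, ?_, fun l => ?_⟩
    · compute_degree!
    · simp only [coeff_C_mul, coeff_X_one]; ring
    · simp only [eval_mul, eval_C, eval_X]
      have h1 := xx_sub q z hq e k l
      have h2 := xx_add q z hq e k l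
      linear_combination (xx q z e (k+1) l + xx q z e (k+1) (l-1)) * h1 + (1 - q⁻¹) * ww q z e k l * h2
  | m+2, ih =>
    obtain ⟨Q1, d1, c1, e1⟩ := ih (m+1) (by omega)
    obtain ⟨Q0, d0, c0, e0⟩ := ih m (by omega)
    refine ⟨C (1 + q⁻¹) * X * Q1 - (C q⁻¹ * X ^ 2 + C (z * q ^ (e + 1 - k) * (1 - q⁻¹) ^ 2)) * Q0,
      ?_, ?_, fun l => ?_⟩
    · compute_degree!
      all_goals omega
    · have : Q0.coeff (m+2) = 0 := coeff_eq_zero_of_natDegree_lt (by omega)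
      simp only [coeff_sub, add_mul, mul_assoc, coeff_C_mul, coeff_add, coeff_X_mul]
      rw [this, show ((X:ℂ[X])^2 * Q0).coeff (m+2) = Q0.coeff m from coeff_X_pow_mul _ _ _]
      rw [c1, c0]
      ring
    · have h2 := xx_add q z hq e k l
      have h3 := xx_mul q z hq e k l
      have e1 := e1 l
      have e0 := e0 l
      simp only [eval_sub, eval_mul, eval_add, eval_C, eval_X, eval_pow]
      set x := xx q z e (k+1) l
      set y := xx q z e (k+1) (l-1)
      linear_combination (x + y) * e1 - (x*y) * e0 + ww q z e k l * eval (xx q z e k l) Q1 * h2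
        - ww q z e k l * eval (xx q z e k l) Q0 * h3

open Polynomial in
lemma poly_aux' (q z : ℂ) (hq : q ≠ 0) (hr : ∀ m : ℕ, 0 < m → q ^ m ≠ 1) (e : ℤ) (k : ℕ) (m : ℕ) :
    ∃ Q : ℂ[X],
    Q.natDegree = m ∧ Q.Monic ∧ ∀ l,
    xx q z e (k+1) l ^ (m+1) - xx q z e (k+1) (l-1) ^ (m+1) =
      (1 - q⁻¹ ^ (m+1)) * (ww q z e k l * Q.eval (xx q z e k l)) := by
  obtain ⟨Q, d, c, h⟩ := poly_aux q z hq e k m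
  have hc : (1 - q⁻¹ ^ (m + 1)) ≠ 0 := by
    intro h0
    apply hr (m+1) (by omega)
    rw [inv_pow] at h0
    exact inv_eq_one.1 (sub_eq_zero.1 h0).symm
  have hd : (C (1 - q⁻¹ ^ (m + 1))⁻¹ * Q).natDegree ≤ m := (natDegree_C_mul_le _ _).trans d
  have hcc : (C (1 - q⁻¹ ^ (m + 1))⁻¹ * Q).coeff m = 1 := by
    rw [coeff_C_mul, c, inv_mul_cancel₀ hc]
  refine ⟨C (1 - q⁻¹ ^ (m + 1))⁻¹ * Q, ?_, monic_of_natDegree_le_of_coeff_eq_one m hd hcc, ?_⟩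
  · refine le_antisymm hd (le_natDegree_of_ne_zero ?_)
    rw [hcc]; exact one_ne_zero
  · intro l
    rw [h, eval_mul, eval_C]
    generalize (1 - q⁻¹ ^ (m + 1)) = t at hc
    field_simp

lemma vdm_step (n : ℕ) (v : Fin (n+1) → ℂ) :
    (Matrix.vandermonde v).det = (-1) ^ n *
      (Matrix.of fun i j : Fin n => v i.castSucc ^ ((j:ℕ)+1) - v i.succ ^ ((j:ℕ)+1)).det := by
  have h1 : (Matrix.vandermonde v).det =
      (Matrix.of fun i j : Fin (n+1) => (Fin.cons (v 0 ^ (j:ℕ))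
        (fun i : Fin n => v i.succ ^ (j:ℕ) - v i.castSucc ^ (j:ℕ)) : Fin (n+1) → ℂ) i).det := by
    refine Matrix.det_eq_of_forall_row_eq_smul_add_pred (fun _ => 1) ?_ ?_
    · intro j; simp [Matrix.vandermonde_apply]
    · intro i j; simp [Matrix.vandermonde_apply]
  rw [h1, Matrix.det_succ_column_zero, Fin.sum_univ_succ]
  simp only [Matrix.of_apply, Fin.cons_zero, Fin.cons_succ, Fin.val_zero, pow_zero, sub_self,
    mul_zero, zero_mul, Finset.sum_const_zero, add_zero, one_mul]
  have h2 : (-1 : ℂ) ^ n = (-1) ^ Fintype.card (Fin n) := by simp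
  rw [h2, ← Matrix.det_smul]
  congr 1
  ext i j
  simp [Matrix.submatrix]

lemma tele (Y : ℤ → ℂ) (A B : ℕ) (h : A ≤ B) :
    ∑ m ∈ Icc A B, (Y m - Y (m - 1)) = Y B - Y (A - 1) := by
  induction B, h using Nat.le_induction with
  | base => simp
  | succ n hn ih =>
    rw [← Finset.insert_Icc_right_eq_Icc_add_one (by omega), Finset.sum_insert (by simp), ih]
    push_cast; simp

lemma sum_fin_Icc (c : ℕ) (A B : Fin (c+1)) (f : ℕ → ℂ) :
    ∑ m : Fin (c+1), (if A ≤ m ∧ m ≤ B then f m else 0) = ∑ m ∈ Icc (A:ℕ) B, f m := by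
  have := Fin.sum_univ_eq_sum_range (fun m => if (A:ℕ) ≤ m ∧ m ≤ B then f m else 0) (c+1)
  simp only [Fin.le_def]
  rw [this, ← Finset.sum_filter]
  refine Finset.sum_congr ?_ (fun _ _ => rfl)
  ext x; simp; omega

lemma det_sum {X : Type*} [Fintype X] (n : ℕ) (h : Fin n → X → ℂ) (F : Fin n → Fin n → X → ℂ) :
    (Matrix.of fun i j : Fin n => ∑ m : X, h i m * F i j m).det =
    ∑ mu : Fin n → X, (∏ i, h i (mu i)) * (Matrix.of fun i j : Fin n => F i j (mu i)).det := by
  have hd : ∀ M : Matrix (Fin n) (Fin n) ℂ, M.det =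
      ∑ s : Equiv.Perm (Fin n), ((Equiv.Perm.sign s : ℤ) : ℂ) * ∏ i, M i (s i) := by
    intro M
    rw [← Matrix.det_transpose, Matrix.det_apply']
    rfl
  simp_rw [hd, Matrix.of_apply, Finset.prod_univ_sum, Fintype.piFinset_univ, Finset.mul_sum]
  rw [Finset.sum_comm]
  refine Finset.sum_congr rfl fun mu _ => Finset.sum_congr rfl fun s _ => ?_
  rw [Finset.prod_mul_distrib]; ring

lemma one_step (q z : ℂ) (hq : q ≠ 0) (hr : ∀ m : ℕ, 0 < m → q ^ m ≠ 1) (e : ℤ) (n : ℕ) :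
    ∃ K : ℂ, K ≠ 0 ∧ ∀ (c : ℕ) (lam : Fin (n+1) → Fin (c+1)), Antitone lam →
    (Matrix.vandermonde (fun i => xx q z e (n+1) ((lam i : ℕ) - (i:ℕ) : ℤ))).det =
    K * ∑ mu : Fin n → Fin (c+1), (if ∀ i, lam i.succ ≤ mu i ∧ mu i ≤ lam i.castSucc then
      (∏ i, ww q z e n ((mu i : ℕ) - (i:ℕ) : ℤ)) else 0) *
        (Matrix.vandermonde (fun i => xx q z e n ((mu i : ℕ) - (i:ℕ) : ℤ))).det := by
  choose Q hQd hQm hQ using poly_aux' q z hq hr e n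
  refine ⟨(-1)^n * ∏ j : Fin n, (1 - q⁻¹ ^ ((j:ℕ)+1)), ?_, ?_⟩
  · refine mul_ne_zero (by simp) (Finset.prod_ne_zero_iff.2 fun j _ h0 => ?_)
    apply hr (j+1) (by omega)
    rw [inv_pow] at h0
    exact inv_eq_one.1 (sub_eq_zero.1 h0).symm
  intro c lam hlam
  rw [vdm_step, mul_assoc]
  congr 1
  have hent : ∀ i j : Fin n, xx q z e (n+1) ((lam i.castSucc : ℕ) - (i.castSucc:ℕ) : ℤ) ^ ((j:ℕ)+1)
      - xx q z e (n+1) ((lam i.succ : ℕ) - (i.succ:ℕ) : ℤ) ^ ((j:ℕ)+1) =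
      (1 - q⁻¹ ^ ((j:ℕ)+1)) * ∑ m : Fin (c+1), (if lam i.succ ≤ m ∧ m ≤ lam i.castSucc then
        ww q z e n ((m:ℕ) - (i:ℕ) : ℤ) * (Q j).eval (xx q z e n ((m:ℕ) - (i:ℕ) : ℤ)) else 0) := by
    intro i j
    rw [sum_fin_Icc c _ _ (fun m => ww q z e n ((m:ℕ) - (i:ℕ) : ℤ) *
      (Q j).eval (xx q z e n ((m:ℕ) - (i:ℕ) : ℤ)))]
    rw [Finset.mul_sum]
    simp_rw [← hQ]
    have := tele (fun l => xx q z e (n+1) (l - (i:ℕ)) ^ ((j:ℕ)+1)) (lam i.succ) (lam i.castSucc)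
      (hlam (Fin.castSucc_lt_succ).le)
    simp only [Fin.val_castSucc, Fin.val_succ]
    rw [show (((lam i.succ : ℕ) : ℤ) - ((i:ℕ)+1 : ℕ)) = (lam i.succ : ℕ) - 1 - (i:ℕ) by push_cast; ring]
    rw [← this]
    refine Finset.sum_congr rfl fun m _ => ?_
    rw [show (m:ℤ) - 1 - (i:ℕ) = m - (i:ℕ) - 1 by ring]
  simp_rw [hent]
  have := Matrix.det_mul_row (fun j : Fin n => (1 - q⁻¹ ^ ((j:ℕ)+1)))
    (Matrix.of fun i j : Fin n => ∑ m : Fin (c+1), (if lam i.succ ≤ m ∧ m ≤ lam i.castSucc then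
        ww q z e n ((m:ℕ) - (i:ℕ) : ℤ) * (Q j).eval (xx q z e n ((m:ℕ) - (i:ℕ) : ℤ)) else 0))
  simp only [Matrix.of_apply] at this
  rw [this]
  congr 1
  have hvd : ∀ mu : Fin n → Fin (c+1),
      (Matrix.vandermonde (fun i => xx q z e n ((mu i : ℕ) - (i:ℕ) : ℤ))).det =
      (Matrix.of fun i j : Fin n => (Q j).eval (xx q z e n ((mu i:ℕ) - (i:ℕ) : ℤ))).det := by
    intro mu
    exact Matrix.det_eval_matrixOfPolynomials_eq_det_vandermonde _ (fun j => Q j) (fun j => hQd j)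
      (fun j => hQm j)
  simp_rw [hvd]
  have key := det_sum n (fun (i : Fin n) (m : Fin (c+1)) =>
      if lam i.succ ≤ m ∧ m ≤ lam i.castSucc then ww q z e n ((m:ℕ) - (i:ℕ) : ℤ) else 0)
    (fun i j m => (Q j).eval (xx q z e n ((m:ℕ) - (i:ℕ) : ℤ)))
  simp only [ite_mul, zero_mul] at key ⊢
  rw [key]
  refine Finset.sum_congr rfl fun mu _ => ?_
  rw [Finset.prod_ite_zero]
  simp

/-- interlacing step weight -/
noncomputable def stepW (q z : ℂ) (e : ℤ) {c : ℕ} (n : ℕ) (lam : Fin (n+1) → Fin (c+1))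
    (mu : Fin n → Fin (c+1)) : ℂ :=
  if ∀ i, lam i.succ ≤ mu i ∧ mu i ≤ lam i.castSucc then
      (∏ i, ww q z e n ((mu i : ℕ) - (i:ℕ) : ℤ)) else 0

/-- interlacing condition -/
def gtOK {c : ℕ} (n : ℕ) (T : ∀ k : Fin (n+1), Fin (k:ℕ) → Fin (c+1)) : Prop :=
  ∀ (k : Fin n) (i : Fin (k:ℕ)), T k.succ i.succ ≤ T k.castSucc i ∧ T k.castSucc i ≤ T k.succ i.castSucc

/-- pattern weight -/
noncomputable def gtW (q z : ℂ) (e : ℤ) {c : ℕ} (n : ℕ)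
    (T : ∀ k : Fin (n+1), Fin (k:ℕ) → Fin (c+1)) : ℂ :=
  if gtOK n T then ∏ k : Fin n, ∏ i : Fin (k:ℕ), ww q z e k ((T k.castSucc i : ℕ) - (i:ℕ) : ℤ) else 0

/-- pattern sum -/
noncomputable def gtZ (q z : ℂ) (e : ℤ) {c : ℕ} (n : ℕ) (lam : Fin n → Fin (c+1)) : ℂ :=
  ∑ T : (∀ k : Fin (n+1), Fin (k:ℕ) → Fin (c+1)), if T (Fin.last n) = lam then gtW q z e n T else 0

lemma gtW_succ (q z : ℂ) (e : ℤ) {c : ℕ} (n : ℕ)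
    (T : ∀ k : Fin (n+2), Fin (k:ℕ) → Fin (c+1)) :
    gtW q z e (n+1) T = stepW q z e n (T (Fin.last (n+1))) (T (Fin.last n).castSucc) *
      gtW q z e n (fun k => T k.castSucc) := by
  have h : gtOK (n+1) T ↔ (∀ i : Fin n, (T (Fin.last (n+1)) : Fin (n+1) → _) i.succ ≤
      (T (Fin.last n).castSucc : Fin n → _) i ∧
      (T (Fin.last n).castSucc : Fin n → _) i ≤ (T (Fin.last (n+1)) : Fin (n+1) → _) i.castSucc) ∧
      gtOK n (fun k => T k.castSucc) := by
    unfold gtOK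
    rw [Fin.forall_fin_succ', and_comm]
    exact Iff.rfl
  unfold gtW stepW
  simp only [h]
  rw [Fin.prod_univ_castSucc, mul_comm]
  by_cases h1 : (∀ i : Fin n, (T (Fin.last (n+1)) : Fin (n+1) → _) i.succ ≤
      (T (Fin.last n).castSucc : Fin n → _) i ∧
      (T (Fin.last n).castSucc : Fin n → _) i ≤ (T (Fin.last (n+1)) : Fin (n+1) → _) i.castSucc)
  · by_cases h2 : gtOK n (fun k => T k.castSucc)
    · rw [if_pos ⟨h1, h2⟩, if_pos h1, if_pos h2]
      rfl
    · rw [if_neg (fun h => h2 h.2), if_neg h2, mul_zero]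
  · rw [if_neg (fun h => h1 h.1), if_neg h1, zero_mul]

lemma gtZ_succ (q z : ℂ) (e : ℤ) {c : ℕ} (n : ℕ) (lam : Fin (n+1) → Fin (c+1)) :
    gtZ q z e (n+1) lam = ∑ mu : Fin n → Fin (c+1), stepW q z e n lam mu * gtZ q z e n mu := by
  unfold gtZ
  rw [← (Fin.snocEquiv (fun k : Fin (n+2) => Fin (k:ℕ) → Fin (c+1))).sum_comp]
  rw [Fintype.sum_prod_type]
  simp only [gtW_succ]
  have hs : ∀ (x : Fin ((Fin.last (n+1) : Fin (n+2)) : ℕ) → Fin (c+1))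
      (y : ∀ k : Fin (n+1), Fin ((k.castSucc : Fin (n+2)) : ℕ) → Fin (c+1)),
      (Fin.snocEquiv (fun k : Fin (n+2) => Fin (k:ℕ) → Fin (c+1))) (x, y) (Fin.last (n+1)) = x := by
    intro x y; simp [Fin.snocEquiv]
  have hs2 : ∀ (x : Fin ((Fin.last (n+1) : Fin (n+2)) : ℕ) → Fin (c+1))
      (y : ∀ k : Fin (n+1), Fin ((k.castSucc : Fin (n+2)) : ℕ) → Fin (c+1)) (k : Fin (n+1)),
      (Fin.snocEquiv (fun k : Fin (n+2) => Fin (k:ℕ) → Fin (c+1))) (x, y) k.castSucc = y k := by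
    intro x y k; simp [Fin.snocEquiv]
  simp only [hs, hs2]
  refine (Finset.sum_eq_single (M := ℂ) (s := Finset.univ)
    (f := fun x : Fin (n+1) → Fin (c+1) => ∑ y : (∀ k : Fin (n+1), Fin (k : ℕ) → Fin (c+1)),
      if x = lam then stepW q z e n x (y (Fin.last n)) * gtW q z e n y else 0) lam ?_ ?_).trans ?_
  · intro b _ hb
    refine Finset.sum_eq_zero fun T _ => ?_
    rw [if_neg hb]
  · simp
  · simp only [if_true, Finset.mul_sum]
    rw [Finset.sum_comm]
    refine Finset.sum_congr rfl fun T _ => ?_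
    refine Eq.symm ((Finset.sum_eq_single (M := ℂ) (s := Finset.univ)
      (f := fun x : Fin n → Fin (c+1) => stepW q z e n lam x *
        if T (Fin.last n) = x then gtW q z e n T else 0) (T (Fin.last n)) ?_ ?_).trans ?_)
    · intro b _ hb
      rw [if_neg (Ne.symm hb), mul_zero]
    · simp
    · rw [if_pos rfl]

lemma gt_main (q z : ℂ) (hq : q ≠ 0) (hr : ∀ m : ℕ, 0 < m → q ^ m ≠ 1) (e : ℤ) (n : ℕ) :
    ∃ K : ℂ, K ≠ 0 ∧ ∀ (c : ℕ) (lam : Fin n → Fin (c+1)), Antitone lam →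
    (Matrix.vandermonde (fun i => xx q z e n ((lam i : ℕ) - (i:ℕ) : ℤ))).det =
    K * gtZ q z e n lam := by
  induction n with
  | zero =>
    refine ⟨1, one_ne_zero, fun c lam _ => ?_⟩
    have h0 : ∀ T : (∀ k : Fin (0+1), Fin (k:ℕ) → Fin (c+1)), T (Fin.last 0) = lam := by
      intro T; funext i; exact i.elim0
    have : Unique (∀ k : Fin (0+1), Fin (k:ℕ) → Fin (c+1)) :=
      { default := fun _ _ => 0
        uniq := fun T => by
          funext k i
          exact absurd i.2 (by omega) }
    unfold gtZ
    rw [Fintype.sum_unique, if_pos (h0 _)]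
    simp [gtW, gtOK]
  | succ n ih =>
    obtain ⟨K, hK, h⟩ := ih
    obtain ⟨K', hK', h'⟩ := one_step q z hq hr e n
    refine ⟨K' * K, mul_ne_zero hK' hK, fun c lam hlam => ?_⟩
    rw [h' c lam hlam, gtZ_succ, mul_assoc, Finset.mul_sum (a := K)]
    congr 1
    refine Finset.sum_congr rfl fun mu _ => ?_
    unfold stepW
    split_ifs with hc
    · rw [h c mu]
      · ring
      · intro i j hij
        rcases hij.eq_or_lt with rfl | hlt
        · exact le_rfl
        · refine (hc j).2.trans (le_trans (hlam ?_) (hc i).1)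
          rw [Fin.le_def]; simp; omega
    · simp

lemma gt_const (q z : ℂ) (hq : q ≠ 0) (hr : ∀ m : ℕ, 0 < m → q ^ m ≠ 1) (e : ℤ) (n : ℕ) :
    ∃ K : ℂ, K ≠ 0 ∧ ∀ (c : ℕ),
    (Matrix.vandermonde (fun i : Fin n => xx q z e n ((c : ℤ) - (i:ℕ) : ℤ))).det =
    K * ∏ k ∈ range n, ∏ i ∈ range k, ww q z e k ((c:ℤ) - (i:ℕ)) := by
  induction n with
  | zero => exact ⟨1, one_ne_zero, fun c => by simp⟩
  | succ n ih =>
    obtain ⟨K, hK, h⟩ := ih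
    obtain ⟨K', hK', h'⟩ := one_step q z hq hr e n
    refine ⟨K' * K, mul_ne_zero hK' hK, fun c => ?_⟩
    have := h' c (fun _ => Fin.last c) (fun _ _ _ => le_rfl)
    simp only [Fin.val_last] at this
    rw [this, mul_assoc]
    congr 1
    rw [Finset.sum_eq_single (fun _ => Fin.last c)]
    · simp only [le_refl, and_self, implies_true, if_true, Fin.val_last]
      rw [h c, Finset.prod_range_succ]
      rw [Fin.prod_univ_eq_prod_range (fun i => ww q z e n ((c:ℤ) - (i:ℕ))) n]
      ring
    · intro mu _ hmu
      rw [if_neg, zero_mul]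
      intro hc
      exact hmu (funext fun i => le_antisymm (hc i).2 (hc i).1)
    · simp

lemma vdm_range (n : ℕ) (f : ℕ → ℂ) :
    (Matrix.vandermonde (fun i : Fin n => f i)).det =
      ∏ j ∈ range n, ∏ i ∈ range j, (f j - f i) := by
  rw [Matrix.det_vandermonde]
  rw [Finset.prod_sigma', Finset.prod_sigma']
  refine Finset.prod_bij (fun x _ => ⟨(x.2 : ℕ), (x.1 : ℕ)⟩) ?_ ?_ ?_ ?_
  · rintro ⟨i, j⟩ h; simp at h ⊢; omega
  · rintro ⟨i, j⟩ _ ⟨i', j'⟩ _ h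
    simp only [Sigma.mk.injEq, heq_eq_eq] at h ⊢
    omega
  · rintro ⟨j, i⟩ h
    simp at h
    exact ⟨⟨⟨i, by omega⟩, ⟨j, h.1⟩⟩, by simp [h.2], rfl⟩
  · rintro ⟨i, j⟩ _; rfl

lemma tri (n : ℕ) (f : ℕ → ℕ → ℂ) :
    ∏ k ∈ range n, ∏ i ∈ range k, f i (k-1-i) = ∏ i ∈ range n, ∏ v ∈ range (n-1-i), f i v := by
  rw [Finset.prod_sigma', Finset.prod_sigma']
  refine Finset.prod_bij' (fun x _ => ⟨x.2, x.1-1-x.2⟩) (fun x _ => ⟨x.1+x.2+1, x.1⟩) ?_ ?_ ?_ ?_ ?_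
  · rintro ⟨i, j⟩ h; simp at h ⊢; omega
  · rintro ⟨i, j⟩ h; simp at h ⊢; omega
  · rintro ⟨i, j⟩ h; simp at h ⊢; omega
  · rintro ⟨i, j⟩ h; simp
  · rintro ⟨i, j⟩ h; rfl

/-- extension of an array to the triangle -/
noncomputable def extP {a b c : ℕ} (P : Fin a → Fin b → Fin (c + 1)) (u v : ℕ) : Fin (c+1) :=
  if hv : v < b then (if hu : u < a then P ⟨u, hu⟩ ⟨b - 1 - v, by omega⟩ else 0) else Fin.last c

/-- the top row -/
def lam0 (a b c : ℕ) (i : Fin (a+b)) : Fin (c+1) := if (i:ℕ) < a then Fin.last c else 0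

lemma lam0_anti (a b c : ℕ) : Antitone (lam0 a b c) := by
  intro i j hij
  unfold lam0
  split_ifs with h1 h2
  · exact le_rfl
  · exact absurd (lt_of_le_of_lt (Fin.le_def.1 hij) h1) h2
  · exact Fin.zero_le _
  · exact le_rfl

/-- total version of the entries of a pattern -/
noncomputable def tt {c n : ℕ} (T : ∀ k : Fin (n+1), Fin (k:ℕ) → Fin (c+1)) (u v : ℕ) : Fin (c+1) :=
  if h : u + v < n then T ⟨u + v + 1, by omega⟩ ⟨u, by simp⟩ else 0

lemma tt_eq {c n : ℕ} (T : ∀ k : Fin (n+1), Fin (k:ℕ) → Fin (c+1)) (k : Fin (n+1)) (i : Fin (k:ℕ)) :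
    T k i = tt T i (k - 1 - i) := by
  obtain ⟨k, hk⟩ := k
  obtain ⟨i, hi⟩ := i
  simp only at hi
  obtain ⟨v, rfl⟩ : ∃ v, k = i + v + 1 := ⟨k - 1 - i, by omega⟩
  have : i + v + 1 - 1 - i = v := by omega
  simp only [this]
  unfold tt
  rw [dif_pos (by omega)]

lemma tt_step1 {c n : ℕ} (T : ∀ k : Fin (n+1), Fin (k:ℕ) → Fin (c+1)) (hT : gtOK n T) (u v : ℕ)
    (h : u + v + 1 < n) : tt T (u+1) v ≤ tt T u v := by
  have := (hT ⟨u + v + 1, by omega⟩ ⟨u, by simp⟩).1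
  rw [tt_eq T, tt_eq T] at this
  simp only [Fin.val_succ, Fin.val_castSucc] at this
  convert this using 2 <;> omega

lemma tt_step2 {c n : ℕ} (T : ∀ k : Fin (n+1), Fin (k:ℕ) → Fin (c+1)) (hT : gtOK n T) (u v : ℕ)
    (h : u + v + 1 < n) : tt T u v ≤ tt T u (v+1) := by
  have := (hT ⟨u + v + 1, by omega⟩ ⟨u, by simp⟩).2
  rw [tt_eq T, tt_eq T] at this
  simp only [Fin.val_succ, Fin.val_castSucc] at this
  convert this using 2 <;> omega

lemma tt_anti {c n : ℕ} (T : ∀ k : Fin (n+1), Fin (k:ℕ) → Fin (c+1)) (hT : gtOK n T) (u u' v : ℕ)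
    (hu : u ≤ u') (h : u' + v < n) : tt T u' v ≤ tt T u v := by
  induction u', hu using Nat.le_induction with
  | base => exact le_rfl
  | succ m hm ih => exact (tt_step1 T hT m v (by omega)).trans (ih (by omega))

lemma tt_mono {c n : ℕ} (T : ∀ k : Fin (n+1), Fin (k:ℕ) → Fin (c+1)) (hT : gtOK n T) (u v v' : ℕ)
    (hv : v ≤ v') (h : u + v' < n) : tt T u v ≤ tt T u v' := by
  induction v', hv using Nat.le_induction with
  | base => exact le_rfl
  | succ m hm ih => exact (ih (by omega)).trans (tt_step2 T hT u m (by omega))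

lemma tt_top {a b c : ℕ} (T : ∀ k : Fin (a+b+1), Fin (k:ℕ) → Fin (c+1))
    (h : T (Fin.last (a+b)) = lam0 a b c) (u v : ℕ) (huv : u + v + 1 = a + b) :
    tt T u v = if u < a then Fin.last c else 0 := by
  have h1 := congrFun h ⟨u, by simp only [Fin.val_last]; omega⟩
  rw [tt_eq T] at h1
  simp only [Fin.val_last] at h1
  rw [show a + b - 1 - u = v by omega] at h1
  rw [h1]; rfl

lemma ext_ok {a b c : ℕ} (P : Fin a → Fin b → Fin (c + 1)) (hP : IsPlanePartition P) :
    gtOK (a+b) (fun k i => extP P i ((k:ℕ) - 1 - (i:ℕ))) := by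
  rintro ⟨k, hk⟩ ⟨i, hi⟩
  simp only at hi
  simp only [Fin.succ_mk, Fin.castSucc_mk]
  obtain ⟨v, rfl⟩ : ∃ v, k = i + v + 1 := ⟨k - 1 - i, by omega⟩
  have e1 : i + v + 1 - 1 - i = v := by omega
  have e2 : i + v + 1 + 1 - 1 - (i+1) = v := by omega
  have e3 : i + v + 1 + 1 - 1 - i = v + 1 := by omega
  rw [e1, e2, e3]
  unfold extP
  constructor
  · split_ifs with h1 h2 h3 h3
    · exact hP _ _ _ _ (by simp) le_rfl
    · omega
    · exact Fin.zero_le _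
    · exact le_rfl
    · exact le_rfl
  · by_cases h1 : v + 1 < b
    · rw [dif_pos h1, dif_pos (by omega : v < b)]
      split_ifs with h2
      · exact hP _ _ _ _ le_rfl (by rw [Fin.le_def]; simp; omega)
      · exact le_rfl
    · rw [dif_neg h1]; exact Fin.le_last _

lemma ext_top {a b c : ℕ} (P : Fin a → Fin b → Fin (c + 1)) (i : Fin (a+b)) :
    extP P i (a + b - 1 - (i:ℕ)) = lam0 a b c i := by
  unfold extP lam0
  have := i.2
  by_cases h : (i:ℕ) < a
  · rw [dif_neg (by omega), if_pos h]
  · rw [dif_pos (by omega), dif_neg h, if_neg h]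

lemma ppSum (q z : ℂ) (e : ℤ) (a b c : ℕ) :
    gtZ q z e (a+b) (lam0 a b c) =
    ∑ P : {P : Fin a → Fin b → Fin (c + 1) // IsPlanePartition P},
      ∏ k ∈ range (a+b), ∏ i ∈ range k, ww q z e k ((extP P.1 i (k-1-i) : ℕ) - (i:ℕ) : ℤ) := by
  unfold gtZ gtW
  simp_rw [← ite_and]
  rw [← Finset.sum_filter]
  symm
  refine Finset.sum_bij' (fun P _ => fun k i => extP P.1 i ((k:ℕ) - 1 - (i:ℕ)))
    (fun T hT => ⟨fun i j => tt T i (b - 1 - j), ?_⟩) ?_ ?_ ?_ ?_ ?_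
  · simp only [mem_filter, mem_univ, true_and] at hT
    intro i i' j j' hi hj
    have h1 := i'.2
    have h2 := j'.2
    rw [Fin.le_def] at hi hj
    exact (tt_anti T hT.2 i i' _ hi (by omega)).trans (tt_mono T hT.2 _ _ _ (by omega) (by omega))
  · intro P _
    simp only [mem_filter, mem_univ, true_and]
    exact ⟨funext fun i => ext_top P.1 i, ext_ok P.1 P.2⟩
  · intro T _; exact mem_univ _
  · intro P _
    apply Subtype.ext
    funext i j
    have h1 := i.2
    have h2 := j.2
    simp only [tt]
    rw [dif_pos (by omega)]
    have : (i:ℕ) + (b - 1 - (j:ℕ)) + 1 - 1 - (i:ℕ) = b - 1 - (j:ℕ) := by omega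
    simp only [this]
    unfold extP
    rw [dif_pos (by omega), dif_pos h1]
    exact congrArg (P.1 i) (Fin.ext (by simp; omega))
  · intro T hT
    simp only [mem_filter, mem_univ, true_and] at hT
    funext k i
    have hk := k.2
    have hi := i.2
    rw [tt_eq T k i]
    generalize hv : (k:ℕ) - 1 - (i:ℕ) = v
    unfold extP
    split_ifs with h1 h2
    · simp only
      congr 1; omega
    · symm
      apply le_antisymm _ (Fin.zero_le _)
      refine (tt_mono T hT.2 i v (a + b - 1 - i) (by omega) (by omega)).trans ?_
      rw [tt_top T hT.1 _ _ (by omega), if_neg h2]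
    · symm
      apply le_antisymm (Fin.le_last _)
      refine le_trans ?_ (tt_anti T hT.2 i (a + b - 1 - v) v (by omega) (by omega))
      rw [tt_top T hT.1 _ _ (by omega), if_pos (by omega)]
  · intro P _
    rw [← Fin.prod_univ_eq_prod_range (fun k => ∏ i ∈ range k, ww q z e k ((extP P.1 i (k-1-i) : ℕ) - (i:ℕ) : ℤ))]
    refine Finset.prod_congr rfl fun k _ => ?_
    rw [← Fin.prod_univ_eq_prod_range (fun i => ww q z e k ((extP P.1 i (k-1-i) : ℕ) - (i:ℕ) : ℤ))]
    rfl

lemma ww_ne (q z : ℂ) (hq : q ≠ 0) (hz : ∀ m : ℤ, z ≠ q ^ m) (e : ℤ) (k : ℕ) (l : ℤ) :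
    ww q z e k l ≠ 0 := by
  intro h
  apply hz (e + 1 - k - l - l)
  unfold ww at h
  rw [zpow_sub₀ hq _ l, eq_div_iff (zpow_ne_zero _ hq)]
  exact sub_eq_zero.1 h

lemma tri_split (q z : ℂ) (a b c : ℕ) (ha : 0 < a) (hb : 0 < b)
    (P : Fin a → Fin b → Fin (c + 1)) :
    ∏ k ∈ range (a+b), ∏ i ∈ range k, ww q z ((b:ℤ)-1) k ((extP P i (k-1-i) : ℕ) - (i:ℕ) : ℤ) =
    (∏ i ∈ range a, ∏ v ∈ range b, ww q z ((b:ℤ)-1) (i+v+1) ((extP P i v : ℕ) - (i:ℕ) : ℤ)) *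
    (∏ k ∈ range a, ∏ i ∈ range k, ww q z (-1) k ((c:ℤ) - (i:ℕ))) *
    (∏ i ∈ range b, ∏ v ∈ range (b-1-i), ww q z ((b:ℤ)-1) (a+i+v+1) (0 - ((a+i : ℕ):ℤ))) := by
  have h1 : ∏ k ∈ range (a+b), ∏ i ∈ range k, ww q z ((b:ℤ)-1) k ((extP P i (k-1-i) : ℕ) - (i:ℕ) : ℤ)
    = ∏ k ∈ range (a+b), ∏ i ∈ range k, (fun i v => ww q z ((b:ℤ)-1) (i+v+1) ((extP P i v : ℕ) - (i:ℕ) : ℤ)) i (k-1-i) := by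
    refine prod_congr rfl fun k hk => prod_congr rfl fun i hi => ?_
    simp only [mem_range] at hk hi ⊢
    rw [show i + (k-1-i) + 1 = k by omega]
  have h2 : ∏ k ∈ range a, ∏ i ∈ range k, ww q z (-1) k ((c:ℤ) - (i:ℕ)) =
    ∏ k ∈ range a, ∏ i ∈ range k, (fun i v => ww q z (-1) (i+v+1) ((c:ℤ) - (i:ℕ))) i (k-1-i) := by
    refine prod_congr rfl fun k hk => prod_congr rfl fun i hi => ?_
    simp only [mem_range] at hk hi ⊢
    rw [show i + (k-1-i) + 1 = k by omega]
  rw [h1, h2, tri (a+b) (fun i v => ww q z ((b:ℤ)-1) (i+v+1) ((extP P i v : ℕ) - (i:ℕ) : ℤ)),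
    tri a (fun i v => ww q z (-1) (i+v+1) ((c:ℤ) - (i:ℕ))), prod_range_add, ← prod_mul_distrib]
  congr 1
  · refine prod_congr rfl fun i hi => ?_
    simp only [mem_range] at hi
    rw [show a + b - 1 - i = b + (a-1-i) by omega, prod_range_add]
    congr 1
    refine prod_congr rfl fun v hv => ?_
    simp only [mem_range] at hv
    have : extP P i (b+v) = Fin.last c := by unfold extP; rw [dif_neg (by omega)]
    simp only [this, Fin.val_last]
    unfold ww
    congr 3
    push_cast; ring
  · refine prod_congr rfl fun i hi => ?_
    simp only [mem_range] at hi
    rw [show a + b - 1 - (a + i) = b-1-i by omega]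
    refine prod_congr rfl fun v hv => ?_
    simp only [mem_range] at hv
    have : extP P (a+i) v = 0 := by unfold extP; rw [dif_pos (by omega), dif_neg (by omega)]
    simp only [this, Fin.val_zero, Nat.cast_zero]

/-- rectangle sum -/
noncomputable def Gt (q z : ℂ) (a b c : ℕ) : ℂ :=
  ∑ P : {P : Fin a → Fin b → Fin (c + 1) // IsPlanePartition P},
    ∏ i ∈ range a, ∏ v ∈ range b, ww q z ((b:ℤ)-1) (i+v+1) ((extP P.1 i v : ℕ) - (i:ℕ) : ℤ)

/-- cross product -/
noncomputable def Cr (q z : ℂ) (a b c : ℕ) : ℂ :=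
  ∏ j ∈ range b, ∏ i ∈ range a, (xx q z (-1) a (0 - ((a+j : ℕ):ℤ)) - xx q z (-1) a ((c:ℤ) - (i:ℕ)))

lemma Gt_Cr (q z : ℂ) (hq : q ≠ 0) (hr : ∀ m : ℕ, 0 < m → q ^ m ≠ 1) (hz : ∀ m : ℤ, z ≠ q ^ m)
    (a b : ℕ) (ha : 0 < a) (hb : 0 < b) : ∃ κ : ℂ, ∀ c, Gt q z a b c = κ * Cr q z a b c := by
  obtain ⟨K, hK, h⟩ := gt_main q z hq hr ((b:ℤ)-1) (a+b)
  obtain ⟨K', hK', h'⟩ := gt_const q z hq hr (-1) a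
  set B := ∏ i ∈ range b, ∏ v ∈ range (b-1-i), ww q z ((b:ℤ)-1) (a+i+v+1) (0 - ((a+i : ℕ):ℤ)) with hB
  have hB0 : B ≠ 0 := prod_ne_zero_iff.2 fun i _ => prod_ne_zero_iff.2 fun v _ => ww_ne q z hq hz _ _ _
  set Vb := ∏ j ∈ range b, ∏ i ∈ range j, (xx q z (-1) a (0 - ((a+j : ℕ):ℤ)) - xx q z (-1) a (0 - ((a+i : ℕ):ℤ))) with hVb
  refine ⟨K' * Vb / (K * B), fun c => ?_⟩
  have h1 := h c (lam0 a b c) (lam0_anti a b c)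
  rw [ppSum] at h1
  simp_rw [tri_split q z a b c ha hb, ← hB] at h1
  rw [← Finset.sum_mul, ← Finset.sum_mul, ← Gt] at h1
  have h2 := h' c
  set A := ∏ k ∈ range a, ∏ i ∈ range k, ww q z (-1) k ((c:ℤ) - (i:ℕ)) with hA
  have hA0 : A ≠ 0 := prod_ne_zero_iff.2 fun i _ => prod_ne_zero_iff.2 fun v _ => ww_ne q z hq hz _ _ _
  have hx : ∀ l, xx q z ((b:ℤ)-1) (a+b) l = xx q z (-1) a l := by
    intro l; unfold xx; congr 2; push_cast; ring
  have hl : ∀ i : Fin (a+b), ((lam0 a b c i : ℕ) : ℤ) = if (i:ℕ) < a then (c:ℤ) else 0 := by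
    intro i; unfold lam0; split_ifs <;> simp
  simp_rw [hx, hl] at h1
  rw [vdm_range (a+b) (fun i => xx q z (-1) a ((if i < a then (c:ℤ) else 0) - i))] at h1
  rw [vdm_range a (fun i => xx q z (-1) a ((c:ℤ) - i))] at h2
  rw [prod_range_add] at h1
  have e1 : ∏ j ∈ range a, ∏ i ∈ range j, (xx q z (-1) a ((if j < a then (c:ℤ) else 0) - j) -
      xx q z (-1) a ((if i < a then (c:ℤ) else 0) - i)) = K' * A := by
    rw [← h2]
    refine prod_congr rfl fun j hj => prod_congr rfl fun i hi => ?_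
    simp only [mem_range] at hi hj
    rw [if_pos hj, if_pos (by omega)]
  have e2 : ∏ j ∈ range b, ∏ i ∈ range (a+j), (xx q z (-1) a ((if a+j < a then (c:ℤ) else 0) - ((a+j:ℕ):ℤ)) -
      xx q z (-1) a ((if i < a then (c:ℤ) else 0) - i)) = Cr q z a b c * Vb := by
    unfold Cr
    rw [hVb, ← prod_mul_distrib]
    refine prod_congr rfl fun j hj => ?_
    rw [prod_range_add]
    congr 1
    · refine prod_congr rfl fun i hi => ?_
      simp only [mem_range] at hi hj
      rw [if_neg (by omega), if_pos hi]
    · refine prod_congr rfl fun i hi => ?_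
      rw [if_neg (by omega), if_neg (by omega)]
  rw [e1, e2] at h1
  have h3 : A * (K' * (Cr q z a b c * Vb)) = A * (K * (Gt q z a b c * B)) := by
    linear_combination h1
  have h4 := mul_left_cancel₀ hA0 h3
  rw [div_mul_eq_mul_div, eq_div_iff (mul_ne_zero hK hB0)]
  linear_combination -h4

/-- numerator sum -/
noncomputable def GG (q z : ℂ) (a b c : ℕ) : ℂ :=
  ∑ P : {P : Fin a → Fin b → Fin (c + 1) // IsPlanePartition P},
    q ^ ppVolume P.1 * ∏ i : Fin a, ∏ j : Fin b,
      (z - q ^ (((i : ℤ) + 1) + ((j : ℤ) + 1) - 2 * (P.1 i j : ℤ) - 2))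

lemma Gt_GG (q z : ℂ) (hq : q ≠ 0) (a b c : ℕ) :
    Gt q z a b c = (∏ i : Fin a, ∏ _j : Fin b, q ^ (-(i:ℤ))) * GG q z a b c := by
  unfold Gt GG
  rw [mul_sum]
  refine sum_congr rfl fun P _ => ?_
  unfold ppVolume
  simp_rw [← prod_pow_eq_pow_sum]
  rw [← prod_mul_distrib, ← prod_mul_distrib]
  rw [← Fin.prod_univ_eq_prod_range (fun i => ∏ v ∈ range b, ww q z ((b:ℤ)-1) (i+v+1) ((extP P.1 i v : ℕ) - (i:ℕ) : ℤ))]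
  refine prod_congr rfl fun i _ => ?_
  rw [← prod_mul_distrib, ← prod_mul_distrib, ← prod_range_reflect]
  rw [← Fin.prod_univ_eq_prod_range (fun j => ww q z ((b:ℤ)-1) (i+(b-1-j)+1) ((extP P.1 i (b-1-j) : ℕ) - (i:ℕ) : ℤ))]
  refine prod_congr rfl fun j _ => ?_
  have hj := j.2
  have : extP P.1 i (b-1-j) = P.1 i j := by
    unfold extP
    rw [dif_pos (by omega), dif_pos i.2]
    exact congrArg (P.1 i) (Fin.ext (by simp; omega))
  rw [this]
  unfold ww
  generalize (P.1 i j : ℕ) = m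
  have h1 : (((i:ℕ) + (b - 1 - (j:ℕ)) + 1 : ℕ) : ℤ) = i + b - j := by omega
  rw [h1, ← zpow_natCast q m, ← mul_assoc, ← zpow_add₀ hq, mul_sub, ← zpow_add₀ hq, mul_comm z]
  congr 2 <;> [skip; skip] <;> ring_nf

lemma Cr_eval (q z : ℂ) (hq : q ≠ 0) (a b c : ℕ) :
    Cr q z a b c = (∏ _i : Fin a, ∏ j : Fin b, q ^ (-(a:ℤ) - j)) *
      ((∏ i : Fin a, ∏ j : Fin b, (1 - q ^ (((i : ℕ) + 1) + ((j : ℕ) + 1) + c - 1))) *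
       (∏ i : Fin a, ∏ j : Fin b, (z - q ^ (((i : ℤ) + 1) + ((j : ℤ) + 1) - (c : ℤ) - 2)))) := by
  have hr : (∏ i : Fin a, ∏ j : Fin b, (1 - q ^ (((i : ℕ) + 1) + ((j : ℕ) + 1) + c - 1))) =
      (∏ i : Fin a, ∏ j : Fin b, (1 - q ^ (((a - 1 - (i:ℕ)) + 1) + ((j : ℕ) + 1) + c - 1))) := by
    rw [Fin.prod_univ_eq_prod_range (fun i => ∏ j : Fin b, (1 - q ^ ((i + 1) + ((j : ℕ) + 1) + c - 1))),
      Fin.prod_univ_eq_prod_range (fun i => ∏ j : Fin b, (1 - q ^ ((a - 1 - i + 1) + ((j : ℕ) + 1) + c - 1))),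
      prod_range_reflect (fun i => ∏ j : Fin b, (1 - q ^ ((i + 1) + ((j : ℕ) + 1) + c - 1)))]
  rw [hr]
  unfold Cr
  rw [prod_comm]
  simp_rw [← prod_mul_distrib]
  rw [← Fin.prod_univ_eq_prod_range (fun i => ∏ j ∈ range b, (xx q z (-1) a (0 - ((a+j : ℕ):ℤ)) - xx q z (-1) a ((c:ℤ) - (i:ℕ))))]
  refine prod_congr rfl fun i _ => ?_
  rw [← Fin.prod_univ_eq_prod_range (fun j => (xx q z (-1) a (0 - ((a+j : ℕ):ℤ)) - xx q z (-1) a ((c:ℤ) - (i:ℕ))))]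
  refine prod_congr rfl fun j _ => ?_
  have hi := i.2
  unfold xx
  rw [← zpow_natCast q (a - 1 - (i:ℕ) + 1 + ((j : ℕ) + 1) + c - 1)]
  have h1 : ((a - 1 - (i:ℕ) + 1 + ((j : ℕ) + 1) + c - 1 : ℕ) : ℤ) = a - i + j + c := by omega
  rw [h1]
  push_cast
  have e1 : q ^ ((0:ℤ) - (a + (j:ℕ))) = q ^ (-(a:ℤ) - (j:ℕ)) := by congr 1; ring
  have e2 : q ^ ((c:ℤ) - (i:ℕ)) = q ^ (-(a:ℤ) - (j:ℕ)) * q ^ ((a:ℤ) - (i:ℕ) + (j:ℕ) + c) := by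
    rw [← zpow_add₀ hq]; congr 1; ring
  have e3 : q ^ ((0:ℤ) - a - (0 - (a + (j:ℕ)))) = q ^ (-(a:ℤ) - (j:ℕ)) * q ^ ((a:ℤ) - (i:ℕ) + (j:ℕ) + c) * q ^ (((i:ℕ) : ℤ) + 1 + ((j : ℕ) + 1) - c - 2) := by
    rw [← zpow_add₀ hq, ← zpow_add₀ hq]; congr 1; ring
  have e4 : q ^ ((0:ℤ) - a - (c - (i:ℕ))) = q ^ (-(a:ℤ) - (j:ℕ)) * q ^ (((i:ℕ) : ℤ) + 1 + ((j : ℕ) + 1) - c - 2) := by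
    rw [← zpow_add₀ hq]; congr 1; ring
  rw [e1, e2, e3, e4]
  ring

lemma GG_zero (q z : ℂ) (a b : ℕ) :
    GG q z a b 0 = ∏ i : Fin a, ∏ j : Fin b, (z - q ^ (((i : ℤ) + 1) + ((j : ℤ) + 1) - ((0:ℕ) : ℤ) - 2)) := by
  unfold GG
  have : Unique {P : Fin a → Fin b → Fin (0 + 1) // IsPlanePartition P} :=
    { default := ⟨fun _ _ => 0, fun _ _ _ _ _ _ => le_rfl⟩
      uniq := fun P => Subtype.ext (by funext i j; apply Fin.ext; omega) }
  rw [Fintype.sum_unique]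
  simp [ppVolume]

lemma generic (q z : ℂ) (hq : q ≠ 0) (hr : ∀ m : ℕ, 0 < m → q ^ m ≠ 1) (hz : ∀ m : ℤ, z ≠ q ^ m)
    (a b c : ℕ) (ha : 0 < a) (hb : 0 < b) :
    GG q z a b c * (∏ i : Fin a, ∏ j : Fin b, (1 - q ^ (((i : ℕ) + 1) + ((j : ℕ) + 1) - 1))) =
    (∏ i : Fin a, ∏ j : Fin b, (1 - q ^ (((i : ℕ) + 1) + ((j : ℕ) + 1) + c - 1))) *
       (∏ i : Fin a, ∏ j : Fin b, (z - q ^ (((i : ℤ) + 1) + ((j : ℤ) + 1) - (c : ℤ) - 2))) := by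
  obtain ⟨κ, h⟩ := Gt_Cr q z hq hr hz a b ha hb
  have hc := h c
  have h0 := h 0
  rw [Gt_GG q z hq, Cr_eval q z hq] at hc h0
  rw [GG_zero] at h0
  simp only [add_zero] at h0
  set M := ∏ i : Fin a, ∏ _j : Fin b, q ^ (-(i:ℤ))
  set L := ∏ _i : Fin a, ∏ j : Fin b, q ^ (-(a:ℤ) - j)
  set Z0 := ∏ i : Fin a, ∏ j : Fin b, (z - q ^ (((i : ℤ) + 1) + ((j : ℤ) + 1) - ((0:ℕ) : ℤ) - 2))
  have hM : M ≠ 0 := prod_ne_zero_iff.2 fun i _ => prod_ne_zero_iff.2 fun v _ => zpow_ne_zero _ hq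
  have hZ : Z0 ≠ 0 := prod_ne_zero_iff.2 fun i _ => prod_ne_zero_iff.2 fun v _ => sub_ne_zero.2 (hz _)
  apply mul_left_cancel₀ (mul_ne_zero hM hZ)
  set R0 := (∏ i : Fin a, ∏ j : Fin b, (1 - q ^ (((i : ℕ) + 1) + ((j : ℕ) + 1) - 1)))
  set Rc := (∏ i : Fin a, ∏ j : Fin b, (1 - q ^ (((i : ℕ) + 1) + ((j : ℕ) + 1) + c - 1)))
  set Zc := (∏ i : Fin a, ∏ j : Fin b, (z - q ^ (((i : ℤ) + 1) + ((j : ℤ) + 1) - (c : ℤ) - 2)))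
  linear_combination Z0 * R0 * hc - Rc * Zc * h0

lemma generic_q (q z : ℂ) (hq : q ≠ 0) (hr : ∀ m : ℕ, 0 < m → q ^ m ≠ 1)
    (a b c : ℕ) (ha : 0 < a) (hb : 0 < b) :
    GG q z a b c * (∏ i : Fin a, ∏ j : Fin b, (1 - q ^ (((i : ℕ) + 1) + ((j : ℕ) + 1) - 1))) =
    (∏ i : Fin a, ∏ j : Fin b, (1 - q ^ (((i : ℕ) + 1) + ((j : ℕ) + 1) + c - 1))) *
       (∏ i : Fin a, ∏ j : Fin b, (z - q ^ (((i : ℤ) + 1) + ((j : ℤ) + 1) - (c : ℤ) - 2))) := by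
  have hd : Dense (Set.range (fun m : ℤ => q ^ m))ᶜ :=
    (Set.countable_range _).dense_compl ℝ
  have := Continuous.ext_on hd
    (f := fun z => GG q z a b c * (∏ i : Fin a, ∏ j : Fin b, (1 - q ^ (((i : ℕ) + 1) + ((j : ℕ) + 1) - 1))))
    (g := fun z => (∏ i : Fin a, ∏ j : Fin b, (1 - q ^ (((i : ℕ) + 1) + ((j : ℕ) + 1) + c - 1))) *
       (∏ i : Fin a, ∏ j : Fin b, (z - q ^ (((i : ℤ) + 1) + ((j : ℤ) + 1) - (c : ℤ) - 2))))
    (by unfold GG; fun_prop) (by fun_prop)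
    (fun z hz => generic q z hq hr (fun m hm => hz ⟨m, hm.symm⟩) a b c ha hb)
  exact congrFun this z

lemma all_q (q z : ℂ) (hq : q ≠ 0)
    (a b c : ℕ) (ha : 0 < a) (hb : 0 < b) :
    GG q z a b c * (∏ i : Fin a, ∏ j : Fin b, (1 - q ^ (((i : ℕ) + 1) + ((j : ℕ) + 1) - 1))) =
    (∏ i : Fin a, ∏ j : Fin b, (1 - q ^ (((i : ℕ) + 1) + ((j : ℕ) + 1) + c - 1))) *
       (∏ i : Fin a, ∏ j : Fin b, (z - q ^ (((i : ℤ) + 1) + ((j : ℤ) + 1) - (c : ℤ) - 2))) := by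
  set S : Set ℂ := (({0} : Set ℂ) ∪ ⋃ m : ℕ, {x : ℂ | x ^ (m+1) = 1})ᶜ with hS
  have hcount : (({0} : Set ℂ) ∪ ⋃ m : ℕ, {x : ℂ | x ^ (m+1) = 1}).Countable := by
    refine (Set.countable_singleton _).union (Set.countable_iUnion fun m => ?_)
    refine Set.Finite.countable ?_
    refine (Polynomial.nthRootsFinset (m+1) (1:ℂ)).finite_toSet.subset fun x hx => ?_
    simp only [Finset.mem_coe]
    rw [Polynomial.mem_nthRootsFinset (by omega)]
    exact hx
  have hd : Dense S := hcount.dense_compl ℝ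
  have hne : (nhdsWithin q S).NeBot := mem_closure_iff_nhdsWithin_neBot.1 (hd q)
  have hz : ∀ m : ℤ, ContinuousAt (fun q : ℂ => q ^ m) q := fun m => continuousAt_zpow₀ q m (Or.inl hq)
  have c1 : ContinuousAt (fun q => GG q z a b c * (∏ i : Fin a, ∏ j : Fin b, (1 - q ^ (((i : ℕ) + 1) + ((j : ℕ) + 1) - 1)))) q := by
    unfold GG
    refine ContinuousAt.mul ?_ (by fun_prop)
    refine tendsto_finsetSum _ fun P _ => ?_
    refine ContinuousAt.mul (by fun_prop) ?_
    refine tendsto_finsetProd _ fun i _ => tendsto_finsetProd _ fun j _ => ?_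
    exact continuousAt_const.sub (hz _)
  have c2 : ContinuousAt (fun q => (∏ i : Fin a, ∏ j : Fin b, (1 - q ^ (((i : ℕ) + 1) + ((j : ℕ) + 1) + c - 1))) *
       (∏ i : Fin a, ∏ j : Fin b, (z - q ^ (((i : ℤ) + 1) + ((j : ℤ) + 1) - (c : ℤ) - 2)))) q := by
    refine ContinuousAt.mul (by fun_prop) ?_
    refine tendsto_finsetProd _ fun i _ => tendsto_finsetProd _ fun j _ => ?_
    exact continuousAt_const.sub (hz _)
  refine tendsto_nhds_unique (l := nhdsWithin q S) (c1.tendsto.mono_left nhdsWithin_le_nhds)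
    ((c2.tendsto.mono_left nhdsWithin_le_nhds).congr' ?_)
  filter_upwards [self_mem_nhdsWithin] with x hx
  rw [hS, Set.mem_compl_iff, Set.mem_union, not_or] at hx
  refine (generic_q x z (fun h => hx.1 h) (fun m hm h => hx.2 ?_) a b c ha hb).symm
  exact Set.mem_iUnion.2 ⟨m - 1, by simp only [Set.mem_setOf_eq]; rwa [show m - 1 + 1 = m by omega]⟩

/-- q-deformed MacMahon identity:
`Σ_Π q^{|Π|} ∏_{i,j} (ζ² − q^{i+j−2Π_{ij}−2})/(ζ² − q^{i+j−c−2})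
  = ∏_{i,j} (1 − q^{i+j+c−1})/(1 − q^{i+j−1})`
(with `1 ≤ i ≤ a`, `1 ≤ j ≤ b`). -/
theorem q_macmahon_identity (a b c : ℕ) (ha : 0 < a) (hb : 0 < b) (hc : 0 < c)
    (q ζ : ℂ) (hq : q ≠ 0)
    (hden1 : ∀ i j : ℕ, 1 ≤ i → i ≤ a → 1 ≤ j → j ≤ b →
      ζ ^ 2 - q ^ ((i : ℤ) + j - (c : ℤ) - 2) ≠ 0)
    (hden2 : ∀ i j : ℕ, 1 ≤ i → i ≤ a → 1 ≤ j → j ≤ b → 1 - q ^ (i + j - 1) ≠ 0) :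
    ∑ P : {P : Fin a → Fin b → Fin (c + 1) // IsPlanePartition P},
      q ^ ppVolume P.1 *
        ∏ i : Fin a, ∏ j : Fin b,
          ((ζ ^ 2 - q ^ (((i : ℤ) + 1) + ((j : ℤ) + 1) - 2 * (P.1 i j : ℤ) - 2)) /
            (ζ ^ 2 - q ^ (((i : ℤ) + 1) + ((j : ℤ) + 1) - (c : ℤ) - 2))) =
    ∏ i : Fin a, ∏ j : Fin b,
      ((1 - q ^ (((i : ℕ) + 1) + ((j : ℕ) + 1) + c - 1)) /
        (1 - q ^ (((i : ℕ) + 1) + ((j : ℕ) + 1) - 1))) := by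
  simp_rw [prod_div_distrib, mul_div_assoc']
  rw [← sum_div]
  have h := all_q q (ζ^2) hq a b c ha hb
  unfold GG at h
  rw [div_eq_div_iff]
  · exact h
  · refine prod_ne_zero_iff.2 fun i _ => prod_ne_zero_iff.2 fun j _ => ?_
    have := hden1 (i+1) (j+1) (by omega) (by omega) (by omega) (by omega)
    push_cast at this
    exact this
  · exact prod_ne_zero_iff.2 fun i _ => prod_ne_zero_iff.2 fun j _ =>
      hden2 (i+1) (j+1) (by omega) (by omega) (by omega) (by omega)
end

section
/- (Commutation of two-diagonal transfer matrices) Let U_{t+}^{S,t}, U_{S−}^{S,t} be the two-diagonal matrices with entries: U_{t+}^{S,t}(x,x+1) = −q^{T+N−1−t}(1−q^{x−S−N+1})(1−κ²q^{x−T+1})/(1−κ²q^{2x−t−S+1}), U_{t+}^{S,t}(x,x) = (1−q^{x+T−t−S})(1−κ²q^{x+N−t})/(1−κ²q^{2x−t−S+1}); U_{S−}^{S,t}(x,x−1) = q^{−(S+N−1)}(1−q^x)(1−κ²q^{x+N−t})/(1−κ²q^{2x−t−S+1}), U_{S−}^{S,t}(x,x) = −(1−q^{x−S−N+1})(1−κ²q^{x−S−t+1})/(1−κ²q^{2x−t−S+1}),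 and both matrices vanish at all other entries. Then the matrix identity U_{t+}^{S,t} · U_{S−}^{S,t+1} = U_{S−}^{S,t} · U_{t+}^{S−1,t} holds entrywise (for all x, y with |x−y| ≤ 1), for parameters q, κ, N, T such that no denominator vanishes. -/
open Finset

/-- The two-diagonal matrix `U_{t+}^{S,t}` (entries indexed by `x, y ∈ ℤ`). -/
noncomputable def Utp (q κ : ℂ) (N T S t : ℤ) (x y : ℤ) : ℂ :=
  if y = x + 1 then
    -q ^ (T + N - 1 - t) * (1 - q ^ (x - S - N + 1)) * (1 - κ ^ 2 * q ^ (x - T + 1)) /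
      (1 - κ ^ 2 * q ^ (2 * x - t - S + 1))
  else if y = x then
    (1 - q ^ (x + T - t - S)) * (1 - κ ^ 2 * q ^ (x + N - t)) /
      (1 - κ ^ 2 * q ^ (2 * x - t - S + 1))
  else 0

/-- The two-diagonal matrix `U_{S−}^{S,t}` (entries indexed by `x, y ∈ ℤ`). -/
noncomputable def USm (q κ : ℂ) (N T S t : ℤ) (x y : ℤ) : ℂ :=
  if y = x - 1 then
    q ^ (-(S + N - 1)) * (1 - q ^ x) * (1 - κ ^ 2 * q ^ (x + N - t)) /
      (1 - κ ^ 2 * q ^ (2 * x - t - S + 1))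
  else if y = x then
    -(1 - q ^ (x - S - N + 1)) * (1 - κ ^ 2 * q ^ (x - S - t + 1)) /
      (1 - κ ^ 2 * q ^ (2 * x - t - S + 1))
  else 0

/-- the commutation relation `U_{t+}^{S,t} · U_{S−}^{S,t+1} =
U_{S−}^{S,t} · U_{t+}^{S−1,t}`, written entrywise (each matrix product has at most
two nonzero terms, over the two-diagonal supports). -/
theorem transfer_matrix_commutation (q κ : ℂ) (hq : q ≠ 0) (N T : ℤ)
    (hgen : ∀ m : ℤ, 1 - κ ^ 2 * q ^ m ≠ 0) (S t : ℤ) (x y : ℤ) :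
    Utp q κ N T S t x x * USm q κ N T S (t + 1) x y +
      Utp q κ N T S t x (x + 1) * USm q κ N T S (t + 1) (x + 1) y =
    USm q κ N T S t x (x - 1) * Utp q κ N T (S - 1) t (x - 1) y +
      USm q κ N T S t x x * Utp q κ N T (S - 1) t x y := by
  have key : ∀ a b c X k : ℂ, b = a * c → 1 - k * (X * X * b) ≠ 0 →
      1 - k * (X * X * b * (q * q)) ≠ 0 →
      (1 - X * a) * (1 - k * (X * b)) / (1 - k * (X * X * b)) +
        a * (1 - k * (X * c * q)) * (1 - X * q) / (1 - k * (X * X * b * (q * q))) =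
      a * (1 - X) * (1 - k * (X * c)) / (1 - k * (X * X * b)) +
        (1 - k * (X * b * q)) * (1 - X * a * q) / (1 - k * (X * X * b * (q * q))) := by
    intro a b c X k hb h0 h2
    subst hb
    rw [div_add_div _ _ h0 h2, div_add_div _ _ h0 h2]
    congr 1
    ring
  by_cases h1 : y = x - 1
  · subst h1
    have e1 : ¬ (x - 1 = x + 1) := by omega
    have e2 : ¬ (x - 1 = x + 1 - 1) := by omega
    have e3 : ¬ (x - 1 = x) := by omega
    have e4 : ¬ (x - 1 = x - 1 + 1) := by omega
    have e5 : ¬ (x = x + 1) := by omega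
    simp only [Utp, USm, e1, e2, e3, e4, e5, if_true, if_false, mul_zero, add_zero]
    rw [show x - 1 + T - t - (S - 1) = x + T - t - S by ring,
      show x - 1 + N - t = x + N - (t + 1) by ring,
      show 2 * (x - 1) - t - (S - 1) + 1 = 2 * x - (t + 1) - S + 1 by ring]
    ring
  by_cases h2 : y = x + 1
  · subst h2
    have e1 : ¬ (x + 1 = x - 1) := by omega
    have e2 : ¬ (x + 1 = x + 1 - 1) := by omega
    have e3 : ¬ (x + 1 = x) := by omega
    have e4 : ¬ (x + 1 = x - 1 + 1) := by omega
    have e5 : ¬ (x = x - 1) := by omega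
    have e6 : ¬ (x + 1 = x - 1) := by omega
    simp only [Utp, USm, e1, e2, e3, e4, e5, if_true, if_false, mul_zero, zero_add]
    rw [show x + 1 - S - (t + 1) + 1 = x - S - t + 1 by ring,
      show x - (S - 1) - N + 1 = x + 1 - S - N + 1 by ring,
      show 2 * (x + 1) - (t + 1) - S + 1 = 2 * x - t - (S - 1) + 1 by ring]
    ring
  by_cases h3 : y = x
  · subst h3
    have e1 : ¬ (y = y - 1) := by omega
    have e2 : y = y + 1 - 1 := by omega
    have e3 : ¬ (y = y + 1) := by omega
    have e4 : y = y - 1 + 1 := by omega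
    simp only [Utp, USm, e1, e3, ← e2, ← e4, if_true, if_false]
    have hk := key (q ^ (T - t - S)) (q ^ (-t - S)) (q ^ (-T)) (q ^ y) (κ ^ 2)
    have hD : ∀ m, m = 2 * y - t - S → q ^ m = q ^ y * q ^ y * q ^ (-t - S) := by
      rintro m rfl
      rw [← zpow_add₀ hq, ← zpow_add₀ hq]; congr 1; ring
    have hD2 : ∀ m, m = 2 * y - t - S + 2 →
        q ^ m = q ^ y * q ^ y * q ^ (-t - S) * (q * q) := by
      rintro m rfl
      rw [← hD _ rfl, zpow_add₀ hq]; norm_cast; ring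
    have hk := hk (by rw [← zpow_add₀ hq]; congr 1; ring)
      (by rw [← hD _ rfl]; exact hgen _) (by rw [← hD2 _ rfl]; exact hgen _)
    rw [hD (2 * y - (t + 1) - S + 1) (by ring), hD2 (2 * (y + 1) - (t + 1) - S + 1) (by ring),
      hD (2 * (y - 1) - t - (S - 1) + 1) (by ring), hD2 (2 * y - t - (S - 1) + 1) (by ring)]
    have p1 : q ^ (y + T - t - S) = q ^ y * q ^ (T - t - S) := by
      rw [← zpow_add₀ hq]; congr 1; ring
    have p2 : q ^ (y - S - (t + 1) + 1) = q ^ y * q ^ (-t - S) := by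
      rw [← zpow_add₀ hq]; congr 1; ring
    have p3 : q ^ (y - T + 1) = q ^ y * q ^ (-T) * q := by
      rw [← zpow_add₀ hq, ← zpow_add_one₀ hq]; congr 1
    have p4 : q ^ (y + 1) = q ^ y * q := zpow_add_one₀ hq _
    have p5 : q ^ (y - 1 - T + 1) = q ^ y * q ^ (-T) := by
      rw [← zpow_add₀ hq]; congr 1; ring
    have p6 : q ^ (y - S - t + 1) = q ^ y * q ^ (-t - S) * q := by
      rw [← zpow_add₀ hq, ← zpow_add_one₀ hq]; congr 1; ring
    have p7 : q ^ (y + T - t - (S - 1)) = q ^ y * q ^ (T - t - S) * q := by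
      rw [← zpow_add₀ hq, ← zpow_add_one₀ hq]; congr 1; ring
    have p8 : q ^ (T + N - 1 - t) * q ^ (-(S + N - 1)) = q ^ (T - t - S) := by
      rw [← zpow_add₀ hq]; congr 1; ring
    have p9 : y + 1 + N - (t + 1) = y + N - t := by ring
    have p10 : y - 1 - (S - 1) - N + 1 = y - S - N + 1 := by ring
    rw [p1, p2, p3, p4, p5, p6, p7, p9, p10]
    rw [← p8] at hk ⊢
    generalize q ^ (T + N - 1 - t) = A at *
    generalize q ^ (-(S + N - 1)) = B at *
    generalize q ^ (-t - S) = b at *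
    generalize q ^ (-T) = c at *
    generalize q ^ y = X at *
    generalize q ^ (y - S - N + 1) = F at *
    generalize q ^ (y + N - t) = G at *
    generalize q ^ (2 * y - t - S + 1) = D at *
    linear_combination (-(1 - κ ^ 2 * G) * (1 - F) / (1 - κ ^ 2 * D)) * hk
  · have e1 : ¬ (y = x + 1 - 1) := by omega
    have e2 : ¬ (y = x - 1 + 1) := by omega
    simp [Utp, USm, h1, h2, h3]
end
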